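/- Let r ≥ 1, let u ∈ ℝ^r be a nonzero vector, and let A ⊆ ℝ^r be a finite set such that (A,u) is in general position. Let S ⊆ A be a u-pierced simplex and let p ∈ A be a point lying strictly below S. Then there exists exactly one set S′ ⊆ S ∪ {p} with S′ ≠ S such that S′ is a u-pierced simplex; furthermore, this S′ contains p. -/

import Mathlib

/-- A set `S ⊆ ℝ^r` is `u`-pierced if its convex hull meets the line `ℝ·u`. -/
def PiercedU {r : ℕ} (u : Fin r → ℝ) (S : Set (Fin r → ℝ)) : Prop :=
  ∃ c : ℝ, c • u ∈ convexHull ℝ S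

/-- A `u`-pierced simplex `S` is non-degenerate: `S` is affinely independent,
no proper subset of `S` is `u`-pierced, and `u` is not a direction of the
affine hull of `S`. -/
def NonDegenerate {r : ℕ} (u : Fin r → ℝ) (S : Set (Fin r → ℝ)) : Prop :=
  AffineIndependent ℝ ((↑) : S → (Fin r → ℝ)) ∧
  (∀ S' : Set (Fin r → ℝ), S' ⊂ S → ¬ PiercedU u S') ∧
  u ∉ (affineSpan ℝ S).direction

/-- `p` lies strictly below `S`: for some normal vector `ν` with `⟨ν,u⟩ > 0` such
that the affine hull of `S` lies in the hyperplane `⟨ν,·⟩ = c`, one has `⟨ν,p⟩ < c`. -/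
def StrictlyBelow {r : ℕ} (u : Fin r → ℝ) (S : Set (Fin r → ℝ)) (p : Fin r → ℝ) : Prop :=
  ∃ ν : Fin r → ℝ, ∃ c : ℝ,
    0 < (∑ l : Fin r, ν l * u l) ∧ (∀ s ∈ S, (∑ l : Fin r, ν l * s l) = c) ∧
    (∑ l : Fin r, ν l * p l) < c

/-!
Modulo the direction `u`, piercing the line `ℝ·u` means having the origin `x` of the
`(r - 1)`-dimensional quotient in the convex hull. By Carathéodory's theorem a minimal set of `r`
points with this property projects to an affine basis `b` of the quotient. Exchanging `b i` for a
new point `q` keeps `x` in the hull iff `i` minimises `coord i x / coord i q` among the indices with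
`coord i q > 0`, as in the ratio test of the simplex method. A minimiser exists because the
coordinates of `q` sum to `1`; two minimisers `i ≠ j` would leave `x` in the hull after the removal
of both `b i` and `b j`, contradicting minimality.
-/

open Module Set

section Exchange

variable {𝕜 W ι : Type*} [Field 𝕜] [LinearOrder 𝕜] [IsStrictOrderedRing 𝕜]
  [AddCommGroup W] [Module 𝕜 W] (b : AffineBasis ι 𝕜 W) {J : Set ι} {q x : W}

theorem exists_coord_of_mem_convexHull_insert_image (hx : x ∈ convexHull 𝕜 (insert q (b '' J))) :
    ∃ t : 𝕜, 0 ≤ t ∧ (∀ i, t * b.coord i q ≤ b.coord i x) ∧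
      ∀ i ∉ J, b.coord i x = t * b.coord i q := by
  set C : Set W := {y | ∃ t : 𝕜, 0 ≤ t ∧ (∀ i, t * b.coord i q ≤ b.coord i y) ∧
    ∀ i ∉ J, b.coord i y = t * b.coord i q}
  have hC : Convex 𝕜 C := by
    rintro y ⟨t, ht, hle, heq⟩ y' ⟨t', ht', hle', heq'⟩ a a' ha ha' haa'
    have hcoord (i : ι) : b.coord i (a • y + a' • y') = a * b.coord i y + a' * b.coord i y' :=
      Convex.combo_affine_apply haa'
    refine ⟨a * t + a' * t', by positivity, fun i ↦ ?_, fun i hi ↦ ?_⟩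
    · calc (a * t + a' * t') * b.coord i q
          = a * (t * b.coord i q) + a' * (t' * b.coord i q) := by ring
        _ ≤ a * b.coord i y + a' * b.coord i y' := by gcongr; exacts [hle i, hle' i]
        _ = b.coord i (a • y + a' • y') := (hcoord i).symm
    · rw [hcoord, heq i hi, heq' i hi]
      ring
  have hq : q ∈ C := ⟨1, zero_le_one, by simp, by simp⟩
  have hb : b '' J ⊆ C := by
    rintro _ ⟨j, hj, rfl⟩
    refine ⟨0, le_rfl, fun i ↦ ?_, fun i hi ↦ ?_⟩
    · rw [zero_mul]
      exact b.convexHull_eq_nonneg_coord.subset (subset_convexHull 𝕜 _ (mem_range_self j)) i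
    · rw [zero_mul, b.coord_apply_ne (ne_of_mem_of_not_mem hj hi).symm]
  exact convexHull_min (insert_subset hq hb) hC hx

variable [Finite ι]

theorem mem_convexHull_image_of_coord_nonneg
    (hx : ∀ i, 0 ≤ b.coord i x) (hJ : ∀ i ∉ J, b.coord i x = 0) : x ∈ convexHull 𝕜 (b '' J) := by
  have := Fintype.ofFinite ι
  rw [← b.linear_combination_coord_eq_self x, ← finsum_eq_sum_of_fintype]
  refine (convex_convexHull 𝕜 _).finsum_mem hx ?_ fun i hi ↦
    subset_convexHull 𝕜 _ (mem_image_of_mem b (not_imp_comm.1 (hJ i) hi))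
  rw [finsum_eq_sum_of_fintype, b.sum_coord_apply_eq_one]

theorem mem_convexHull_insert_image_of_coord {t : 𝕜} (ht : 0 ≤ t)
    (hle : ∀ i, t * b.coord i q ≤ b.coord i x) (heq : ∀ i ∉ J, b.coord i x = t * b.coord i q) :
    x ∈ convexHull 𝕜 (insert q (b '' J)) := by
  have := Fintype.ofFinite ι
  set w : Option ι → 𝕜 := fun o ↦ o.elim t fun i ↦ b.coord i x - t * b.coord i q
  set z : Option ι → W := fun o ↦ o.elim q b
  have hw_nonneg : ∀ o, 0 ≤ w o := Option.forall.2 ⟨ht, fun i ↦ sub_nonneg.2 (hle i)⟩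
  have hw_sum : ∑ᶠ o, w o = 1 := by
    simp only [finsum_eq_sum_of_fintype, Fintype.sum_option, w, Option.elim_none,
      Option.elim_some, Finset.sum_sub_distrib, ← Finset.mul_sum, b.sum_coord_apply_eq_one]
    ring
  have hz_mem : ∀ o, w o ≠ 0 → z o ∈ insert q (b '' J) := Option.forall.2
    ⟨fun _ ↦ mem_insert _ _, fun i hi ↦ mem_insert_of_mem _ <| mem_image_of_mem b <|
      not_imp_comm.1 (fun hiJ ↦ sub_eq_zero.2 (heq i hiJ)) hi⟩
  have hx : ∑ᶠ o, w o • z o = x := by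
    simp only [finsum_eq_sum_of_fintype, Fintype.sum_option, w, z, Option.elim_none,
      Option.elim_some, sub_smul, mul_smul, Finset.sum_sub_distrib, ← Finset.smul_sum,
      b.linear_combination_coord_eq_self, add_sub_cancel]
  exact hx ▸ (convex_convexHull 𝕜 _).finsum_mem hw_nonneg hw_sum fun o ho ↦
    subset_convexHull 𝕜 _ (hz_mem o ho)

theorem coord_pos_of_notMem_convexHull_image_compl (hx : x ∈ convexHull 𝕜 (range b))
    (hmin : ∀ i, x ∉ convexHull 𝕜 (b '' {i}ᶜ)) (i : ι) : 0 < b.coord i x := by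
  rw [b.convexHull_eq_nonneg_coord] at hx
  refine (hx i).lt_of_ne' fun hi ↦ hmin i (mem_convexHull_image_of_coord_nonneg b hx ?_)
  rintro j hj
  rwa [notMem_compl_iff.1 hj]

theorem exists_mem_convexHull_insert_image_compl (hx : ∀ i, 0 < b.coord i x) (q : W) :
    ∃ i, x ∈ convexHull 𝕜 (insert q (b '' {i}ᶜ)) := by
  have := Fintype.ofFinite ι
  have hpos : (Finset.univ.filter fun i ↦ 0 < b.coord i q).Nonempty := by
    obtain ⟨i, hi, hqi⟩ := Finset.exists_lt_of_sum_lt (s := Finset.univ)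
      (f := fun _ ↦ (0 : 𝕜)) (g := fun i ↦ b.coord i q) (by simp [b.sum_coord_apply_eq_one])
    exact ⟨i, Finset.mem_filter.2 ⟨hi, hqi⟩⟩
  obtain ⟨i, hi, hmin⟩ := Finset.exists_min_image _ (fun i ↦ b.coord i x / b.coord i q) hpos
  have hqi : 0 < b.coord i q := (Finset.mem_filter.1 hi).2
  have ht : 0 ≤ b.coord i x / b.coord i q := (div_pos (hx i) hqi).le
  refine ⟨i, mem_convexHull_insert_image_of_coord b ht (fun j ↦ ?_) fun j hj ↦ ?_⟩
  · rcases lt_or_ge 0 (b.coord j q) with hqj | hqj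
    · exact (le_div_iff₀ hqj).1 (hmin j (Finset.mem_filter.2 ⟨Finset.mem_univ j, hqj⟩))
    · exact (mul_nonpos_of_nonneg_of_nonpos ht hqj).trans (hx j).le
  · rw [notMem_compl_iff.1 hj, div_mul_cancel₀ _ hqi.ne']

theorem mem_convexHull_insert_image_compl_pair {i j : ι} (hxi : 0 < b.coord i x)
    (hxj : 0 < b.coord j x) (hi : x ∈ convexHull 𝕜 (insert q (b '' {i}ᶜ)))
    (hj : x ∈ convexHull 𝕜 (insert q (b '' {j}ᶜ))) :
    x ∈ convexHull 𝕜 (insert q (b '' {i, j}ᶜ)) := by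
  obtain ⟨t, ht, hle, heq⟩ := exists_coord_of_mem_convexHull_insert_image b hi
  obtain ⟨t', ht', hle', heq'⟩ := exists_coord_of_mem_convexHull_insert_image b hj
  replace heq := heq i (by simp)
  replace heq' := heq' j (by simp)
  have hqi : 0 < b.coord i q := pos_of_mul_pos_right (heq ▸ hxi) ht
  have hqj : 0 < b.coord j q := pos_of_mul_pos_right (heq' ▸ hxj) ht'
  have htt' : t = t' := le_antisymm
    (le_of_mul_le_mul_right ((hle j).trans_eq heq') hqj)
    (le_of_mul_le_mul_right ((hle' i).trans_eq heq) hqi)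
  refine mem_convexHull_insert_image_of_coord b ht hle fun k hk ↦ ?_
  rcases notMem_compl_iff.1 hk with rfl | rfl
  · exact heq
  · exact htt' ▸ heq'

end Exchange

theorem subset_ne_ncard_eq_iff_exists_exchange {α : Type*} {S T : Set α} {p : α}
    (hS : S.Finite) (hp : p ∉ S) :
    T ⊆ S ∪ {p} ∧ T ≠ S ∧ T.ncard = S.ncard ↔ ∃ s ∈ S, T = insert p (S \ {s}) := by
  constructor
  · rintro ⟨hT, hTS, hcard⟩
    obtain ⟨s, hs, hsT⟩ : ∃ s ∈ S, s ∉ T := not_subset.1 fun h ↦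
      hTS (eq_of_subset_of_ncard_le h hcard.le (hS.union (finite_singleton p) |>.subset hT)).symm
    refine ⟨s, hs, eq_of_subset_of_ncard_le (fun y hy ↦ ?_) ?_ (hS.sdiff.insert p)⟩
    · exact (hT hy).symm.imp id fun hyS ↦ ⟨hyS, ne_of_mem_of_not_mem hy hsT⟩
    · rw [ncard_exchange hp hs, hcard]
  · rintro ⟨s, hs, rfl⟩
    refine ⟨?_, fun h ↦ hp (h ▸ mem_insert _ _), ncard_exchange hp hs⟩
    rw [union_singleton]
    exact insert_subset_insert sdiff_subset

theorem image_compl_eq_image_sdiff {α β : Type*} {v : α → β} {S : Set α} {f : S → β}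
    (hf : ∀ s, f s = v s) (R : Set S) : f '' Rᶜ = v '' (S \ (↑) '' R) := by
  rw [← image_val_compl, image_image]
  exact image_congr fun s _ ↦ hf s

section MinimalHull

variable {𝕜 W α : Type*} [Field 𝕜] [LinearOrder 𝕜] [IsStrictOrderedRing 𝕜]
  [AddCommGroup W] [Module 𝕜 W] {v : α → W} {x : W} {S : Set α} {p : α}

theorem affineIndependent_of_minimal_mem_convexHull
    (hS : Minimal (fun T ↦ x ∈ convexHull 𝕜 (v '' T)) S) :
    AffineIndependent 𝕜 fun s : S ↦ v s := by
  have hx := hS.prop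
  rw [convexHull_eq_union] at hx
  obtain ⟨t, htS, htind, hxt⟩ := by simpa only [mem_iUnion, exists_prop] using hx
  obtain ⟨T, hTS, hTt⟩ := SurjOn.exists_bijOn_subset htS
  obtain rfl : T = S := hS.eq_of_subset (by rwa [hTt.image_eq]) hTS
  exact htind.comp_embedding
    ⟨fun s : T ↦ ⟨v s, hTt.mapsTo s.2⟩, fun s s' h ↦
      Subtype.ext (hTt.injOn s.2 s'.2 (Subtype.ext_iff.1 h))⟩

theorem exists_affineBasis_coord_pos_of_minimal_mem_convexHull [FiniteDimensional 𝕜 W]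
    (hS : Minimal (fun T ↦ x ∈ convexHull 𝕜 (v '' T)) S) (hcard : S.ncard = finrank 𝕜 W + 1) :
    ∃ b : AffineBasis S 𝕜 W, (∀ s, b s = v s) ∧ ∀ s, 0 < b.coord s x := by
  have hind := affineIndependent_of_minimal_mem_convexHull hS
  have : Finite S := finite_of_fin_dim_affineIndependent 𝕜 hind
  have := Fintype.ofFinite S
  have htop : affineSpan 𝕜 (range fun s : S ↦ v s) = ⊤ := by
    rw [hind.affineSpan_eq_top_iff_card_eq_finrank_add_one, ← hcard, ← Nat.card_coe_set_eq,
      Nat.card_eq_fintype_card]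
  let b : AffineBasis S 𝕜 W := ⟨fun s ↦ v s, hind, htop⟩
  refine ⟨b, fun _ ↦ rfl, coord_pos_of_notMem_convexHull_image_compl b ?_ fun s hs ↦ ?_⟩
  · change x ∈ convexHull 𝕜 (range fun s : S ↦ v s)
    rw [← image_eq_range]
    exact hS.prop
  · rw [image_compl_eq_image_sdiff (f := b) (fun _ ↦ rfl), image_singleton] at hs
    exact hS.not_prop_of_ssubset (sdiff_singleton_ssubset.2 s.2) hs

theorem existsUnique_exchange_mem_convexHull [FiniteDimensional 𝕜 W]
    (hS : Minimal (fun T ↦ x ∈ convexHull 𝕜 (v '' T)) S) (hcard : S.ncard = finrank 𝕜 W + 1)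
    (hp : p ∉ S)
    (hmin : ∀ s ∈ S, x ∈ convexHull 𝕜 (v '' insert p (S \ {s})) →
      Minimal (fun T ↦ x ∈ convexHull 𝕜 (v '' T)) (insert p (S \ {s}))) :
    ∃! s, s ∈ S ∧ x ∈ convexHull 𝕜 (v '' insert p (S \ {s})) := by
  obtain ⟨b, hb, hpos⟩ := exists_affineBasis_coord_pos_of_minimal_mem_convexHull hS hcard
  have := b.finite
  have hexchange (R : Set S) : insert (v p) (b '' Rᶜ) = v '' insert p (S \ (↑) '' R) := by
    rw [image_compl_eq_image_sdiff hb, image_insert_eq]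
  obtain ⟨s, hs⟩ := exists_mem_convexHull_insert_image_compl b hpos (v p)
  have hsS : x ∈ convexHull 𝕜 (v '' insert p (S \ {↑s})) := by
    rwa [← image_singleton, ← hexchange]
  refine ⟨s, ⟨s.2, hsS⟩, fun s' ⟨hs'S, hs'⟩ ↦ by_contra fun hne ↦ ?_⟩
  have hpair : x ∈ convexHull 𝕜 (v '' insert p (S \ {↑s, s'})) := by
    have := mem_convexHull_insert_image_compl_pair b (j := ⟨s', hs'S⟩) (hpos _) (hpos _) hs
      (by rwa [hexchange, image_singleton])
    rwa [hexchange, image_pair] at this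
  have hssubset : insert p (S \ {↑s, s'}) ⊂ insert p (S \ {↑s}) :=
    (ssubset_iff_of_subset (by grind)).2 ⟨s', by grind, by grind⟩
  exact (hmin s s.2 hsS).not_prop_of_ssubset hssubset hpair

end MinimalHull

section Pierced

variable {𝕜 V : Type*} [Field 𝕜] [LinearOrder 𝕜] [AddCommGroup V] [Module 𝕜 V]
  {u : V} {S : Set V} {p : V} {r : ℕ}

variable (𝕜 u S) in
/-- `PiercedU` in a vector space over an ordered field: the convex hull of `S` meets the line `𝕜·u`.
Over `ℝ` and in `Fin r → ℝ` the two agree definitionally. -/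
def IsPierced : Prop :=
  ∃ c : 𝕜, c • u ∈ convexHull 𝕜 S

theorem isPierced_iff_zero_mem_convexHull_image_mkQ :
    IsPierced 𝕜 u S ↔ 0 ∈ convexHull 𝕜 ((𝕜 ∙ u).mkQ '' S) := by
  simp only [IsPierced, ← LinearMap.image_convexHull, mem_image, Submodule.mkQ_apply,
    Submodule.Quotient.mk_eq_zero, Submodule.mem_span_singleton]
  grind

theorem pivoting_step_exists_unique_general [IsStrictOrderedRing 𝕜] [FiniteDimensional 𝕜 V]
    (hu : u ≠ 0) (hr : finrank 𝕜 V = r)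
    (hmin : ∀ T ⊆ S ∪ {p}, IsPierced 𝕜 u T → T.ncard = r → Minimal (IsPierced 𝕜 u) T)
    (hS : IsPierced 𝕜 u S) (hcard : S.ncard = r) (hp : p ∉ S) :
    ∃ S' : Set V,
      (S' ⊆ S ∪ {p} ∧ S' ≠ S ∧ IsPierced 𝕜 u S' ∧ S'.ncard = r) ∧ p ∈ S' ∧
      ∀ S'' : Set V,
        (S'' ⊆ S ∪ {p} ∧ S'' ≠ S ∧ IsPierced 𝕜 u S'' ∧ S''.ncard = r) → S'' = S' := by
  have hW : S.ncard = finrank 𝕜 (V ⧸ 𝕜 ∙ u) + 1 := by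
    rw [← finrank_span_singleton (K := 𝕜) hu, Submodule.finrank_quotient_add_finrank, hr, hcard]
  have hfin : S.Finite := finite_of_ncard_pos (hW ▸ Nat.succ_pos _)
  have hpierced : IsPierced 𝕜 u = fun T ↦ 0 ∈ convexHull 𝕜 ((𝕜 ∙ u).mkQ '' T) :=
    funext fun _ ↦ propext isPierced_iff_zero_mem_convexHull_image_mkQ
  have hexchange (T : Set V) :
      (T ⊆ S ∪ {p} ∧ T ≠ S ∧ IsPierced 𝕜 u T ∧ T.ncard = r) ↔
        IsPierced 𝕜 u T ∧ ∃ s ∈ S, T = insert p (S \ {s}) := by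
    rw [← subset_ne_ncard_eq_iff_exists_exchange hfin hp, hcard]
    tauto
  have hSmin := hmin S subset_union_left hS hcard
  have hTmin : ∀ s ∈ S, IsPierced 𝕜 u (insert p (S \ {s})) →
      Minimal (IsPierced 𝕜 u) (insert p (S \ {s})) := fun s hs hT ↦
    have hsub := (hexchange _).2 ⟨hT, s, hs, rfl⟩
    hmin _ hsub.1 hT hsub.2.2.2
  simp only [hexchange]
  rw [hpierced] at hSmin hTmin ⊢
  obtain ⟨s, ⟨hs, hx⟩, huniq⟩ := existsUnique_exchange_mem_convexHull hSmin hW hp hTmin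
  refine ⟨_, ⟨hx, s, hs, rfl⟩, mem_insert _ _, ?_⟩
  rintro _ ⟨hy, y, hyS, rfl⟩
  rw [huniq y ⟨hyS, hy⟩]

end Pierced

theorem StrictlyBelow.notMem {r : ℕ} {u p : Fin r → ℝ} {S : Set (Fin r → ℝ)}
    (h : StrictlyBelow u S p) : p ∉ S := by
  obtain ⟨ν, c, -, hS, hp⟩ := h
  exact fun hpS ↦ hp.ne (hS p hpS)

/-- pivoting at a pierced simplex `S` with a point `p` strictly below
`S` yields a unique new pierced simplex `S' ⊆ S ∪ {p}`, `S' ≠ S`; moreover `p ∈ S'`. -/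
theorem pivoting_step_exists_unique
    (r : ℕ) (hr : 1 ≤ r) (u : Fin r → ℝ) (hu : u ≠ 0)
    (A : Set (Fin r → ℝ)) (hA : A.Finite)
    (hgp : ∀ S : Set (Fin r → ℝ), S ⊆ A → PiercedU u S → S.ncard = r → NonDegenerate u S)
    (S : Set (Fin r → ℝ)) (hSA : S ⊆ A) (hS : PiercedU u S) (hcard : S.ncard = r)
    (p : Fin r → ℝ) (hpA : p ∈ A) (hbelow : StrictlyBelow u S p) :
    ∃ S' : Set (Fin r → ℝ),
      (S' ⊆ S ∪ {p} ∧ S' ≠ S ∧ PiercedU u S' ∧ S'.ncard = r) ∧ p ∈ S' ∧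
      ∀ S'' : Set (Fin r → ℝ),
        (S'' ⊆ S ∪ {p} ∧ S'' ≠ S ∧ PiercedU u S'' ∧ S''.ncard = r) → S'' = S' := by
  exact pivoting_step_exists_unique_general hu (finrank_fin_fun ℝ)
    (fun T hT hTp hTr ↦ minimal_iff_forall_ssubset.2 ⟨hTp, fun T' hT' ↦
      (hgp T (hT.trans (union_subset hSA (singleton_subset_iff.2 hpA))) hTp hTr).2.1 T' hT'⟩)
    hS hcard hbelow.notMem
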